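/- arXiv:1512.00587 — 4 statements merged into one kernel-verified Lean document; each statement's English description precedes it below -/
import Mathlib

section
/- Let A be a finite alphabet with |A| ≥ 2. The diagonal action of G* on the product ∏_{a∈A} Ω^a is strongly proximal: for every Borel probability measure μ on ∏_{a∈A} Ω^a there exists a sequence g_k ∈ G* such that the pushforward measures g_k μ converge weak* to a point mass. -/
/-! The proof builds explicit involutive automorphisms ("marker" automorphisms). Fix a letter `a`,
a length `k ≥ 1` and a word `s` of length `k` with first letter `≠ a`. The automorphism
`flipHomeo` exchanges the blocks `a^k · a^k · c` and `a^k · s · c`, for every word `c` of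
length `k` with `c₀ ≠ a` and `c ≠ s`. The middle block of an occurrence of such a pattern never
meets another occurrence (`Pat.sep`), so all exchanges can be done simultaneously and doing them
twice is the identity.

On `Ω^a` the automorphism sends every `x` whose word `x₁ … x_k` is not `s` to
`a s x₁ x₂ …` up to later changes (`omegaAct_flip_same`); on `Ω^b` with `b ≠ a` it leaves the
coordinates `0, …, k` untouched (`omegaAct_flip_other`).

Given a measure, a target point `z` and `n`, take for `s` the word `z_a(1) … z_a(n)` followed by
`a^j b` with `b ≠ a`. The corresponding cylinders are disjoint for distinct `j`, so for some `j`
the cylinder has small measure, and outside it the `a`-coordinate is moved to agree with `z_a` up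
to `n`. Since `k ≥ n`, coordinates already treated are not spoiled, and treating the letters one
after the other handles all of them (`exists_good`). Taking the exceptional measures summable,
Borel–Cantelli and dominated convergence conclude. -/

open Filter MeasureTheory

/-! ### The objects of the statement -/

/-- The group of self-homeomorphisms of a topological space,
with `(f * g) x = f (g x)`. -/
instance homeoGroup (X : Type*) [TopologicalSpace X] : Group (X ≃ₜ X) where
  mul f g := g.trans f
  one := Homeomorph.refl X
  inv := Homeomorph.symm
  mul_assoc f g h := Homeomorph.ext fun _ => rfl
  one_mul f := Homeomorph.ext fun _ => rfl
  mul_one f := Homeomorph.ext fun _ => rfl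
  inv_mul_cancel f := Homeomorph.ext f.symm_apply_apply

/-- The left shift `(σ x) m = x (m+1)` on `A^ℤ`, as a homeomorphism. -/
def shiftHomeo (A : Type*) [TopologicalSpace A] : (ℤ → A) ≃ₜ (ℤ → A) where
  toFun x := fun m => x (m + 1)
  invFun x := fun m => x (m - 1)
  left_inv x := funext fun m => by simp
  right_inv x := funext fun m => by simp
  continuous_toFun := continuous_pi fun m => continuous_apply (m + 1)
  continuous_invFun := continuous_pi fun m => continuous_apply (m - 1)

/-- `Aut(A^ℤ)`: the group of homeomorphisms of `A^ℤ` commuting with the shift. -/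
def ShiftAut (A : Type*) [TopologicalSpace A] : Subgroup ((ℤ → A) ≃ₜ (ℤ → A)) :=
  Subgroup.centralizer {shiftHomeo A}

/-- `Ω`: the space of one-sided configurations whose zeroth symbol differs from
the first. -/
def OmegaSet (A : Type*) : Set (ℕ → A) := {x | x 0 ≠ x 1}

/-- `Ω^a`: the elements of `Ω` whose zeroth symbol is `a`. -/
def OmegaA (A : Type*) (a : A) : Set (ℕ → A) := {x | x 0 = a ∧ x 0 ≠ x 1}

/-- `φ : Ω → A^ℤ_*` prepends an infinite constant `x 0` prefix to `x`. -/
def phiMap (A : Type*) (x : ℕ → A) : ℤ → A :=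
  fun m => if m ≤ 0 then x 0 else x m.toNat

/-- `ℓ(y)`: the last coordinate of the constant prefix of `y ∈ A^ℤ_*`. -/
noncomputable def ellVal (A : Type*) (y : ℤ → A) : ℤ :=
  sInf {m : ℤ | y m ≠ y (m + 1)}

/-- The action of `Aut(A^ℤ)` on `Ω`: `g • x = ψ (g (φ x))`, where
`ψ(y) = φ⁻¹(σ^{ℓ(y)} y)`, i.e. `(g • x) n = (g (φ x)) (ℓ (g (φ x)) + n)`. -/
noncomputable def omegaAct (A : Type*) [TopologicalSpace A]
    (g : (ℤ → A) ≃ₜ (ℤ → A)) (x : ℕ → A) : ℕ → A :=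
  fun n => g (phiMap A x) (ellVal A (g (phiMap A x)) + n)

/-- `G* = ∩_{a ∈ A} G^a`, where `G^a` is the set of automorphisms that
preserve `Ω^a` under the action on `Ω`. -/
def Gstar (A : Type*) [TopologicalSpace A] : Set ((ℤ → A) ≃ₜ (ℤ → A)) :=
  {g | g ∈ ShiftAut A ∧ ∀ a : A, omegaAct A g '' OmegaA A a = OmegaA A a}

/-- The product `∏_{a ∈ A} Ω^a`. -/
abbrev ProdOmega (A : Type*) : Type _ := {z : A → ℕ → A // ∀ a : A, z a ∈ OmegaA A a}

/-- The diagonal action of `G*` on `∏_{a ∈ A} Ω^a`. -/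
noncomputable def diagAct (A : Type*) [TopologicalSpace A]
    (g : (ℤ → A) ≃ₜ (ℤ → A)) (hg : g ∈ Gstar A) (z : ProdOmega A) : ProdOmega A :=
  ⟨fun a => omegaAct A g (z.1 a), fun a => by
    have h := hg.2 a
    rw [← h]
    exact Set.mem_image_of_mem _ (z.2 a)⟩

/-! ### The marker automorphism -/

section Marker

variable {A : Type*} (a : A) (s : ℤ → A) (k : ℤ)

/-- The pattern `a^k · w · c` with `w ∈ {a^k, s}`, `c₀ ≠ a`, `c ≠ s`, the block `w` occupying
the positions `p, …, p+k-1` of `x`. Only the values of `s` on `0, …, k-1` matter. -/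
def Pat (x : ℤ → A) (p : ℤ) : Prop :=
  (∀ m, p - k ≤ m → m < p → x m = a) ∧
  ((∀ m, p ≤ m → m < p + k → x m = a) ∨ (∀ m, p ≤ m → m < p + k → x m = s (m - p))) ∧
  x (p + k) ≠ a ∧
  ¬ ∀ m, p + k ≤ m → m < p + 2 * k → x m = s (m - p - k)

open Classical in
/-- Exchange `a^k` and `s` in the middle block of every occurrence of the pattern. -/
noncomputable def flipMap (x : ℤ → A) (m : ℤ) : A :=
  if h : ∃ p, Pat a s k x p ∧ p ≤ m ∧ m < p + k then
    if x h.choose = a then s (m - h.choose) else a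
  else x m

variable {a s k}

/-- Two distinct occurrences are far enough apart that the middle block of either one is disjoint
from the whole of the other. -/
lemma Pat.sep (hk : 1 ≤ k) (hs : s 0 ≠ a) {x : ℤ → A} {p p' : ℤ}
    (h : Pat a s k x p) (h' : Pat a s k x p') (hlt : p < p') : p + 2 * k ≤ p' := by
  obtain ⟨-, h2, h3, h4⟩ := h
  obtain ⟨h1', h2', -, -⟩ := h'
  by_contra hcon
  have hle : p' ≤ p + k := by
    by_contra hc
    exact h3 (h1' _ (by omega) (by omega))
  rcases h2 with h2 | h2
  · rcases hle.lt_or_eq with hl | rfl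
    · have e : x p' = a := h2 _ (by omega) (by omega)
      rcases h2' with h2' | h2'
      · exact h3 (h2' _ (by omega) (by omega))
      · have := h2' p' le_rfl (by omega)
        rw [sub_self, e] at this
        exact hs this.symm
    · rcases h2' with h2' | h2'
      · exact h3 (h2' _ (by omega) (by omega))
      · exact h4 fun m hm hm' => by
          rw [h2' m hm (by omega), sub_sub]
  · have e : x p = s (p - p) := h2 p le_rfl (by omega)
    rw [sub_self] at e
    exact hs (e ▸ h1' p (by omega) hlt)

lemma Pat.unique (hk : 1 ≤ k) (hs : s 0 ≠ a) {x : ℤ → A} {p p' m : ℤ}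
    (h : Pat a s k x p) (h' : Pat a s k x p')
    (h1 : p ≤ m) (h2 : m < p + k) (h1' : p' - k ≤ m) (h2' : m < p' + 2 * k) : p = p' := by
  rcases lt_trichotomy p p' with hl | hl | hl
  · have := h.sep hk hs h' hl
    omega
  · exact hl
  · have := h'.sep hk hs h hl
    omega

open Classical in
lemma flipMap_on (hk : 1 ≤ k) (hs : s 0 ≠ a) {x : ℤ → A} {p m : ℤ} (h : Pat a s k x p)
    (h1 : p ≤ m) (h2 : m < p + k) :
    flipMap a s k x m = if x p = a then s (m - p) else a := by
  have hex : ∃ p, Pat a s k x p ∧ p ≤ m ∧ m < p + k := ⟨p, h, h1, h2⟩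
  have hc := hex.choose_spec
  have e : hex.choose = p := hc.1.unique hk hs h hc.2.1 hc.2.2 (by omega) (by omega)
  rw [flipMap, dif_pos hex, e]

lemma flipMap_off {x : ℤ → A} {m : ℤ} (h : ∀ p, Pat a s k x p → p ≤ m → ¬ m < p + k) :
    flipMap a s k x m = x m := by
  rw [flipMap, dif_neg]
  rintro ⟨p, h1, h2, h3⟩
  exact h p h1 h2 h3

/-- On the first and third block of an occurrence nothing changes. -/
lemma flipMap_side (hk : 1 ≤ k) (hs : s 0 ≠ a) {x : ℤ → A} {p m : ℤ} (h : Pat a s k x p)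
    (h1 : p - k ≤ m) (h2 : m < p + 2 * k) (h3 : m < p ∨ p + k ≤ m) :
    flipMap a s k x m = x m := by
  refine flipMap_off fun p' hp' h4 h5 => ?_
  have := hp'.unique hk hs h h4 h5 h1 h2
  omega

lemma Pat.middle (hs : s 0 ≠ a) (hk : 1 ≤ k) {x : ℤ → A} {p : ℤ} (h : Pat a s k x p) :
    (x p = a ∧ ∀ m, p ≤ m → m < p + k → x m = a) ∨
    (x p ≠ a ∧ ∀ m, p ≤ m → m < p + k → x m = s (m - p)) := by
  rcases h.2.1 with h | h
  · exact Or.inl ⟨h p le_rfl (by omega), h⟩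
  · refine Or.inr ⟨?_, h⟩
    rw [h p le_rfl (by omega), sub_self]
    exact hs

lemma Pat.flip (hk : 1 ≤ k) (hs : s 0 ≠ a) {x : ℤ → A} {p : ℤ} (h : Pat a s k x p) :
    Pat a s k (flipMap a s k x) p := by
  have hc : ∀ m, p + k ≤ m → m < p + 2 * k → flipMap a s k x m = x m := fun m h1 h2 =>
    flipMap_side hk hs h (by omega) h2 (Or.inr h1)
  refine ⟨fun m h1 h2 => ?_, ?_, ?_, fun hall => h.2.2.2 fun m h1 h2 => ?_⟩
  · rw [flipMap_side hk hs h h1 (by omega) (Or.inl h2)]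
    exact h.1 m h1 h2
  · rcases h.middle hs hk with ⟨e, -⟩ | ⟨e, -⟩
    · right
      intro m h1 h2
      rw [flipMap_on hk hs h h1 h2, if_pos e]
    · left
      intro m h1 h2
      rw [flipMap_on hk hs h h1 h2, if_neg e]
  · rw [hc _ le_rfl (by omega)]
    exact h.2.2.1
  · rw [← hc m h1 h2]
    exact hall m h1 h2

lemma Pat.congr {x y : ℤ → A} {p d : ℤ} (hk : 1 ≤ k)
    (hxy : ∀ j, p - k ≤ j → j < p + 2 * k → x j = y (j + d)) (h : Pat a s k x p) :
    Pat a s k y (p + d) := by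
  have key : ∀ m, p + d - k ≤ m → m < p + d + 2 * k → y m = x (m - d) := fun m h1 h2 => by
    rw [hxy (m - d) (by omega) (by omega), sub_add_cancel]
  obtain ⟨h1, h2, h3, h4⟩ := h
  refine ⟨fun m e1 e2 => ?_, ?_, ?_, fun hall => h4 fun m e1 e2 => ?_⟩
  · rw [key m e1 (by omega)]
    exact h1 _ (by omega) (by omega)
  · refine h2.imp (fun h2 m e1 e2 => ?_) (fun h2 m e1 e2 => ?_)
    · rw [key m (by omega) (by omega)]
      exact h2 _ (by omega) (by omega)
    · rw [key m (by omega) (by omega), h2 _ (by omega) (by omega)]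
      congr 1
      omega
  · rw [key _ (by omega) (by omega)]
    convert h3 using 2
    omega
  · rw [hxy m (by omega) e2, hall (m + d) (by omega) (by omega)]
    congr 1
    omega

/-- Exchanging neither destroys nor creates occurrences of the pattern: a new one would meet the middle block of an
old one, which is still an occurrence after the exchange. -/
lemma pat_flip_iff (hk : 1 ≤ k) (hs : s 0 ≠ a) {x : ℤ → A} {p : ℤ} :
    Pat a s k (flipMap a s k x) p ↔ Pat a s k x p := by
  refine ⟨fun h => ?_, fun h => h.flip hk hs⟩
  by_contra hn
  apply hn
  have := Pat.congr (d := 0) (y := x) hk (fun j h1 h2 => ?_) h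
  · simpa using this
  · rw [add_zero]
    refine flipMap_off fun p' hp' h3 h4 => hn ?_
    have e := (hp'.flip hk hs).unique hk hs h h3 h4 h1 h2
    exact e ▸ hp'

lemma flipMap_flipMap (hk : 1 ≤ k) (hs : s 0 ≠ a) (x : ℤ → A) :
    flipMap a s k (flipMap a s k x) = x := by
  funext m
  by_cases hex : ∃ p, Pat a s k x p ∧ p ≤ m ∧ m < p + k
  · obtain ⟨p, h, h1, h2⟩ := hex
    rw [flipMap_on hk hs (h.flip hk hs) h1 h2, flipMap_on hk hs h le_rfl (by omega), sub_self]
    rcases h.middle hs hk with ⟨e, e'⟩ | ⟨e, e'⟩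
    · rw [if_pos e, if_neg hs, e' m h1 h2]
    · rw [if_neg e, if_pos rfl, e' m h1 h2]
  · have h0 : ∀ p, Pat a s k x p → p ≤ m → ¬ m < p + k := fun p h1 h2 h3 =>
      hex ⟨p, h1, h2, h3⟩
    rw [flipMap_off fun p hp => h0 p ((pat_flip_iff hk hs).1 hp), flipMap_off h0]

/-- Locality and shift-equivariance in one statement. -/
lemma flipMap_congr (hk : 1 ≤ k) (hs : s 0 ≠ a) {x y : ℤ → A} {m d : ℤ}
    (hxy : ∀ j, m - 2 * k ≤ j → j ≤ m + 2 * k → x j = y (j + d)) :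
    flipMap a s k x m = flipMap a s k y (m + d) := by
  by_cases hex : ∃ p, Pat a s k x p ∧ p ≤ m ∧ m < p + k
  · obtain ⟨p, h, h1, h2⟩ := hex
    have h' : Pat a s k y (p + d) :=
      h.congr hk fun j e1 e2 => hxy j (by omega) (by omega)
    rw [flipMap_on hk hs h h1 h2, flipMap_on hk hs h' (by omega) (by omega),
      hxy p (by omega) (by omega), add_sub_add_right_eq_sub]
  · rw [flipMap_off fun p h1 h2 h3 => hex ⟨p, h1, h2, h3⟩, flipMap_off,
      hxy m (by omega) (by omega)]
    intro p h1 h2 h3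
    refine hex ⟨p + -d, h1.congr hk fun j e1 e2 => ?_, by omega, by omega⟩
    rw [hxy (j + -d) (by omega) (by omega), neg_add_cancel_right]

lemma continuous_flipMap [TopologicalSpace A] [DiscreteTopology A] (hk : 1 ≤ k) (hs : s 0 ≠ a) :
    Continuous (flipMap a s k) := by
  refine continuous_pi fun m => continuous_iff_continuousAt.2 fun x => ?_
  rw [ContinuousAt, nhds_discrete A, tendsto_pure]
  have : ∀ᶠ y in nhds x, ∀ j ∈ Finset.Icc (m - 2 * k) (m + 2 * k), y j = x j := by
    rw [Filter.eventually_all_finset]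
    intro j _
    have := (continuous_apply j : Continuous fun y : ℤ → A => y j).continuousAt (x := x)
    rwa [ContinuousAt, nhds_discrete A, tendsto_pure] at this
  filter_upwards [this] with y hy
  have := flipMap_congr (x := y) (y := x) (m := m) (d := 0) hk hs fun j h1 h2 => by
    rw [add_zero]
    exact hy j (Finset.mem_Icc.2 ⟨h1, h2⟩)
  rwa [add_zero] at this

/-- The exchange as a self-homeomorphism of `A^ℤ`, equal to its own inverse. -/
noncomputable def flipHomeo [TopologicalSpace A] [DiscreteTopology A] (hk : 1 ≤ k)
    (hs : s 0 ≠ a) : (ℤ → A) ≃ₜ (ℤ → A) where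
  toFun := flipMap a s k
  invFun := flipMap a s k
  left_inv := flipMap_flipMap hk hs
  right_inv := flipMap_flipMap hk hs
  continuous_toFun := continuous_flipMap hk hs
  continuous_invFun := continuous_flipMap hk hs

/-- A constant left tail survives, at the cost of `k` positions. -/
lemma flipMap_tail (hk : 1 ≤ k) (b : A) (y : ℤ → A) (m0 : ℤ)
    (hy : ∀ m ≤ m0, y m = b) (m : ℤ) (hm : m ≤ m0 - k) : flipMap a s k y m = b := by
  rw [flipMap_off, hy m (by omega)]
  intro p hp h1 h2
  have e1 := hp.1 (p - 1) (by omega) (by omega)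
  rw [hy _ (by omega)] at e1
  apply hp.2.2.1
  rw [hy _ (by omega), e1]

end Marker

/-! ### Automorphisms preserving constant left tails -/

section Good

variable {A : Type*}

/-- `g` keeps constant left tails, losing at most `R` positions for a uniform `R`. -/
def TailR (g : (ℤ → A) → (ℤ → A)) : Prop :=
  ∃ R : ℕ, ∀ (b : A) (y : ℤ → A) (m0 : ℤ), (∀ m ≤ m0, y m = b) → ∀ m ≤ m0 - R, g y m = b

/-- Shift-commuting homeomorphisms which, together with their inverse, keep constant left tails.
They belong to `G*`. -/
structure Good [TopologicalSpace A] (g : (ℤ → A) ≃ₜ (ℤ → A)) : Prop where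
  comm : ∀ x, g (shiftHomeo A x) = shiftHomeo A (g x)
  tail : TailR g
  tail_symm : TailR g.symm

/-- `y` has constant left tail `b` ending exactly at position `L`. -/
def IsEll (b : A) (y : ℤ → A) (L : ℤ) : Prop := (∀ m ≤ L, y m = b) ∧ y (L + 1) ≠ b

lemma IsEll.ellVal_eq {b : A} {y : ℤ → A} {L : ℤ} (h : IsEll b y L) : ellVal A y = L := by
  refine IsLeast.csInf_eq ⟨?_, ?_⟩
  · change y L ≠ y (L + 1)
    rw [h.1 L le_rfl]
    exact h.2.symm
  · intro m hm
    by_contra hc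
    apply hm
    rw [h.1 m (by omega), h.1 (m + 1) (by omega)]

lemma exists_isEll {b : A} {y : ℤ → A} (m0 : ℤ) (h : ∀ m ≤ m0, y m = b) (hne : ∃ m, y m ≠ b) :
    ∃ L, IsEll b y L := by
  obtain ⟨L, hL, hmin⟩ := Int.exists_least_of_bdd (P := fun m => y m ≠ b)
    ⟨m0, fun z hz => by
      by_contra hc
      exact hz (h z (by omega))⟩ hne
  refine ⟨L - 1, fun m hm => ?_, by simpa using hL⟩
  by_contra hc
  have := hmin m hc
  omega

lemma IsEll.phi {b : A} {x : ℕ → A} (hx : x ∈ OmegaA A b) : IsEll b (phiMap A x) 0 := by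
  obtain ⟨h0, h1⟩ := hx
  refine ⟨fun m hm => by simp [phiMap, hm, h0], ?_⟩
  simp only [phiMap]
  rw [if_neg (by norm_num)]
  simpa [h0] using h1.symm

lemma phiMap_natCast (x : ℕ → A) (n : ℕ) : phiMap A x n = x n := by
  unfold phiMap
  split_ifs with h
  · have : n = 0 := by omega
    rw [this]
  · simp

lemma TailR.const {g : (ℤ → A) → (ℤ → A)} (h : TailR g) (b : A) :
    g (fun _ => b) = fun _ => b := by
  obtain ⟨R, hR⟩ := h
  funext m
  exact hR b _ (m + R) (fun _ _ => rfl) m (by omega)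

lemma TailR.comp {f g : (ℤ → A) → (ℤ → A)} (hf : TailR f) (hg : TailR g) :
    TailR (fun x => f (g x)) := by
  obtain ⟨R, hR⟩ := hf
  obtain ⟨S, hS⟩ := hg
  refine ⟨R + S, fun b y m0 hy m hm => hR b _ (m0 - S) (hS b y m0 hy) m ?_⟩
  push_cast at hm
  omega

variable [TopologicalSpace A]

lemma continuous_phiMap : Continuous (phiMap A) := by
  refine continuous_pi fun m => ?_
  unfold phiMap
  split_ifs
  · exact continuous_apply 0
  · exact continuous_apply _

lemma Good.symm {g : (ℤ → A) ≃ₜ (ℤ → A)} (h : Good g) : Good g.symm where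
  comm x := by
    apply g.injective
    rw [h.comm]
    simp
  tail := h.tail_symm
  tail_symm := h.tail

lemma Good.trans {g h : (ℤ → A) ≃ₜ (ℤ → A)} (hg : Good g) (hh : Good h) : Good (g.trans h) where
  comm x := by
    change h (g _) = _
    rw [hg.comm, hh.comm]
    rfl
  tail := hh.tail.comp hg.tail
  tail_symm := hg.tail_symm.comp hh.tail_symm

lemma good_refl : Good (Homeomorph.refl (ℤ → A)) where
  comm _ := rfl
  tail := ⟨0, fun b y m0 hy m hm => hy m (by simpa using hm)⟩
  tail_symm := ⟨0, fun b y m0 hy m hm => hy m (by simpa using hm)⟩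

lemma Good.exists_isEll {g : (ℤ → A) ≃ₜ (ℤ → A)} (hg : Good g) {b : A} {y : ℤ → A} {L : ℤ}
    (hy : IsEll b y L) : ∃ L', IsEll b (g y) L' := by
  obtain ⟨R, hR⟩ := hg.tail
  refine _root_.exists_isEll (L - R) (hR b y L hy.1) ?_
  by_contra! hc
  have e : g y = fun _ => b := funext hc
  have e2 : y = fun _ => b := by rw [← hg.tail_symm.const b, ← e, g.symm_apply_apply]
  exact hy.2 (by rw [e2])

/-- Commutation with every power of the shift, evaluated at a position. -/
lemma Good.comm_add {g : (ℤ → A) ≃ₜ (ℤ → A)} (hg : Good g) (y : ℤ → A) (d m : ℤ) :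
    g (fun j => y (j + d)) m = g y (m + d) := by
  have h1 : ∀ y : ℤ → A, g (fun j => y (j + 1)) = fun m => g y (m + 1) := hg.comm
  induction d using Int.induction_on generalizing y m with
  | zero => simp
  | succ n ih =>
    have := congrFun (h1 fun j => y (j + n)) m
    rw [ih] at this
    convert this using 2
    · funext j
      ring_nf
    · ring
  | pred n ih =>
    have := congrFun (h1 fun j => y (j + (-n - 1))) (m - 1)
    rw [sub_add_cancel] at this
    rw [← this]
    have e := ih y (m - 1)
    convert e using 2
    · funext j
      ring_nf
    · ring

lemma omegaAct_eq {g : (ℤ → A) ≃ₜ (ℤ → A)} {b : A} {x : ℕ → A} {L : ℤ}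
    (h : IsEll b (g (phiMap A x)) L) (n : ℕ) :
    omegaAct A g x n = g (phiMap A x) (L + n) := by
  rw [omegaAct, h.ellVal_eq]

lemma omegaAct_mem {g : (ℤ → A) ≃ₜ (ℤ → A)} {b : A} {x : ℕ → A} {L : ℤ}
    (h : IsEll b (g (phiMap A x)) L) : omegaAct A g x ∈ OmegaA A b := by
  have e0 : omegaAct A g x 0 = b := by
    rw [omegaAct_eq h]
    exact h.1 _ (by simp)
  refine ⟨e0, ?_⟩
  rw [e0, omegaAct_eq h]
  exact_mod_cast h.2.symm

lemma phiMap_omegaAct {g : (ℤ → A) ≃ₜ (ℤ → A)} {b : A} {x : ℕ → A} {L : ℤ}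
    (h : IsEll b (g (phiMap A x)) L) :
    phiMap A (omegaAct A g x) = fun j => g (phiMap A x) (j + L) := by
  funext j
  unfold phiMap
  split_ifs with hj
  · rw [(omegaAct_mem h).1]
    exact (h.1 _ (by omega)).symm
  · rw [omegaAct_eq h, Int.toNat_of_nonneg (by omega), add_comm]
    rfl

lemma omegaAct_trans {g h : (ℤ → A) ≃ₜ (ℤ → A)} (hg : Good g) (hh : Good h) {b : A} {x : ℕ → A}
    (hx : x ∈ OmegaA A b) :
    omegaAct A (g.trans h) x = omegaAct A h (omegaAct A g x) := by
  obtain ⟨L, hL⟩ := hg.exists_isEll (IsEll.phi hx)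
  obtain ⟨M, hM⟩ := hh.exists_isEll (IsEll.phi (omegaAct_mem hL))
  have e : ∀ m, h (phiMap A (omegaAct A g x)) m = h (g (phiMap A x)) (m + L) := fun m => by
    rw [phiMap_omegaAct hL, hh.comm_add]
  have hLM : IsEll b ((g.trans h) (phiMap A x)) (M + L) := by
    refine ⟨fun m hm => ?_, ?_⟩
    · have := hM.1 (m - L) (by omega)
      rwa [e, sub_add_cancel] at this
    · have := hM.2
      rw [e] at this
      convert this using 1
      change h (g _) _ = _
      ring_nf
  funext n
  rw [omegaAct_eq hLM, omegaAct_eq hM, e]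
  change h (g _) _ = _
  ring_nf

lemma Good.mapsTo {g : (ℤ → A) ≃ₜ (ℤ → A)} (hg : Good g) {b : A} {x : ℕ → A}
    (hx : x ∈ OmegaA A b) : omegaAct A g x ∈ OmegaA A b := by
  obtain ⟨L, hL⟩ := hg.exists_isEll (IsEll.phi hx)
  exact omegaAct_mem hL

lemma omegaAct_refl {b : A} {x : ℕ → A} (hx : x ∈ OmegaA A b) :
    omegaAct A (Homeomorph.refl _) x = x := by
  funext n
  have : IsEll b (Homeomorph.refl (ℤ → A) (phiMap A x)) 0 := IsEll.phi hx
  rw [omegaAct_eq this, zero_add]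
  exact phiMap_natCast x n

lemma Good.mem_Gstar {g : (ℤ → A) ≃ₜ (ℤ → A)} (hg : Good g) : g ∈ Gstar A := by
  refine ⟨?_, fun b => Set.Subset.antisymm ?_ ?_⟩
  · rw [ShiftAut, Subgroup.mem_centralizer_iff]
    rintro _ rfl
    exact Homeomorph.ext fun x => (hg.comm x).symm
  · rintro _ ⟨x, hx, rfl⟩
    exact hg.mapsTo hx
  · intro x hx
    refine ⟨omegaAct A g.symm x, hg.symm.mapsTo hx, ?_⟩
    rw [← omegaAct_trans hg.symm hg hx]
    have : g.symm.trans g = Homeomorph.refl _ := Homeomorph.ext fun y => g.apply_symm_apply y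
    rw [this, omegaAct_refl hx]

variable [DiscreteTopology A]

/-- The position where the constant tail ends is locally constant, because tails are kept
uniformly. -/
lemma Good.continuous_coord {g : (ℤ → A) ≃ₜ (ℤ → A)} (hg : Good g) (b : A) (i : ℕ) :
    Continuous fun w : ProdOmega A => omegaAct A g (w.1 b) i := by
  refine continuous_iff_continuousAt.2 fun w₀ => ?_
  rw [ContinuousAt, nhds_discrete A, tendsto_pure]
  obtain ⟨R, hR⟩ := hg.tail
  obtain ⟨L, hL⟩ := hg.exists_isEll (IsEll.phi (w₀.2 b))
  have hev : ∀ j : ℤ, ∀ᶠ w : ProdOmega A in nhds w₀,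
      g (phiMap A (w.1 b)) j = g (phiMap A (w₀.1 b)) j := by
    intro j
    have hc : Continuous fun w : ProdOmega A => g (phiMap A (w.1 b)) j :=
      (continuous_apply j).comp (g.continuous.comp (continuous_phiMap.comp
        ((continuous_apply b).comp continuous_subtype_val)))
    have := hc.continuousAt (x := w₀)
    rwa [ContinuousAt, nhds_discrete A, tendsto_pure] at this
  have hfin : ∀ᶠ w : ProdOmega A in nhds w₀, ∀ j ∈ Finset.Icc (-(R : ℤ)) (L + 1 + i),
      g (phiMap A (w.1 b)) j = g (phiMap A (w₀.1 b)) j := by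
    rw [Filter.eventually_all_finset]
    exact fun j _ => hev j
  filter_upwards [hfin, hev (L + 1), hev (L + i)] with w hw hw1 hwi
  have hLw : IsEll b (g (phiMap A (w.1 b))) L := by
    refine ⟨fun m hm => ?_, ?_⟩
    · by_cases hmR : m ≤ 0 - R
      · exact hR b _ 0 (IsEll.phi (w.2 b)).1 m hmR
      · rw [hw m (Finset.mem_Icc.2 ⟨by omega, by omega⟩)]
        exact hL.1 m hm
    · rw [hw1]
      exact hL.2
  rw [omegaAct_eq hLw, omegaAct_eq hL, hwi]

lemma Good.continuous_diagAct {g : (ℤ → A) ≃ₜ (ℤ → A)} (hg : Good g) :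
    Continuous (diagAct A g hg.mem_Gstar) :=
  Continuous.subtype_mk
    (continuous_pi fun b => continuous_pi fun i => hg.continuous_coord b i) _

/-! ### The action of the marker automorphism on `Ω` -/

variable {a : A} {s : ℤ → A} {k : ℤ}

lemma good_flip (hk : 1 ≤ k) (hs : s 0 ≠ a) : Good (flipHomeo hk hs) where
  comm x := by
    funext m
    exact flipMap_congr hk hs (fun j _ _ => rfl)
  tail := ⟨k.toNat, fun b y m0 hy m hm => flipMap_tail hk b y m0 hy m (by omega)⟩
  tail_symm := ⟨k.toNat, fun b y m0 hy m hm => flipMap_tail hk b y m0 hy m (by omega)⟩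

/-- For `b ≠ a` every middle block met in `φ x`, `x ∈ Ω^b`, starts after position `k`. -/
lemma omegaAct_flip_other (hk : 1 ≤ k) (hs : s 0 ≠ a) {b : A} (hb : b ≠ a) {x : ℕ → A}
    (hx : x ∈ OmegaA A b) (i : ℕ) (hi : i ≤ k) :
    omegaAct A (flipHomeo hk hs) x i = x i := by
  have hphi := IsEll.phi hx
  have hfix : ∀ m ≤ k, flipMap a s k (phiMap A x) m = phiMap A x m := by
    intro m hm
    refine flipMap_off fun p hp h1 h2 => ?_
    have := hp.1 (p - k) le_rfl (by omega)
    rw [hphi.1 (p - k) (by omega)] at this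
    exact hb this
  have hL : IsEll b (flipHomeo hk hs (phiMap A x)) 0 :=
    ⟨fun m hm => (hfix m (by omega)).trans (hphi.1 m hm), by
      change flipMap a s k _ _ ≠ b
      rw [hfix _ (by omega)]
      exact hphi.2⟩
  rw [omegaAct_eq hL, zero_add]
  exact (hfix i hi).trans (phiMap_natCast x i)

/-- Off the cylinder of `s`, the word `s` is inserted right after the letter `a`. -/
lemma omegaAct_flip_same (hk : 1 ≤ k) (hs : s 0 ≠ a) {x : ℕ → A}
    (hx : x ∈ OmegaA A a) (hxs : ¬ ∀ i : ℕ, (i : ℤ) < k → x (i + 1) = s i)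
    (i : ℕ) (hi : (i : ℤ) < k) :
    omegaAct A (flipHomeo hk hs) x (i + 1) = s i := by
  have hphi := IsEll.phi hx
  -- the middle block of the occurrence sits at positions `1 - k, …, 0`
  have hp : Pat a s k (phiMap A x) (1 - k) := by
    refine ⟨fun m _ h2 => hphi.1 m (by omega), Or.inl fun m _ h2 => hphi.1 m (by omega), ?_,
      fun hall => hxs fun i hi => ?_⟩
    · rw [sub_add_cancel]
      exact hphi.2
    · have := hall ((i + 1 : ℕ) : ℤ) (by push_cast; omega) (by push_cast; omega)
      rw [phiMap_natCast] at this
      rw [this]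
      congr 1
      push_cast
      ring
  have hon : ∀ m, 1 - k ≤ m → m < 1 → flipMap a s k (phiMap A x) m = s (m - (1 - k)) := by
    intro m h1 h2
    rw [flipMap_on hk hs hp h1 (by omega), if_pos (hphi.1 _ (by omega))]
  have hL : IsEll a (flipHomeo hk hs (phiMap A x)) (-k) := by
    refine ⟨fun m hm => flipMap_tail hk a _ 0 hphi.1 m (by omega), ?_⟩
    change flipMap a s k _ _ ≠ a
    rw [hon _ (by omega) (by omega)]
    convert hs using 2
    ring
  rw [omegaAct_eq hL]
  refine (hon _ (by push_cast; omega) (by push_cast; omega)).trans ?_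
  congr 1
  push_cast
  ring

/-! ### Contracting most of the mass -/

/-- Letters are treated one at a time; the letters of `F` have been treated by `g`. -/
lemma exists_good [Nontrivial A] [MeasurableSpace (ProdOmega A)] [BorelSpace (ProdOmega A)]
    (μ : Measure (ProdOmega A)) [IsProbabilityMeasure μ] (z : ProdOmega A) (n : ℕ) (hn : 1 ≤ n)
    (F : Finset A) : ∀ ε : ENNReal, ε ≠ 0 → ∃ g : (ℤ → A) ≃ₜ (ℤ → A), Good g ∧
      μ {w | ¬ ∀ b ∈ F, ∀ i ≤ n, omegaAct A g (w.1 b) i = z.1 b i} ≤ ε := by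
  classical
  induction F using Finset.induction_on with
  | empty =>
    intro ε _
    exact ⟨Homeomorph.refl _, good_refl, by simp⟩
  | insert a F haF ih =>
    intro ε hε
    have hε2 : ε / 2 ≠ 0 := by simpa using hε
    obtain ⟨g, hg, hμ⟩ := ih (ε / 2) hε2
    obtain ⟨c, hca⟩ := exists_ne a
    -- the words `z_a(1) … z_a(n) a^j c`, of length `n + j + 1`
    let s : ℕ → ℤ → A := fun j i =>
      if i < n then z.1 a (i.toNat + 1) else if i = n + j then c else a
    have hs : ∀ j, s j 0 ≠ a := fun j => by
      have h1 := (z.2 a).2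
      rw [(z.2 a).1] at h1
      simp only [s]
      rw [if_pos (by omega)]
      exact h1.symm
    let S : ℕ → Set (ProdOmega A) := fun j =>
      {w | ∀ i : ℕ, (i : ℤ) < n + j + 1 → omegaAct A g (w.1 a) (i + 1) = s j i}
    have hSm : ∀ j, MeasurableSet (S j) := fun j => by
      refine IsClosed.measurableSet ?_
      simp only [S, Set.ofPred_forall]
      exact isClosed_iInter fun i => isClosed_iInter fun _ =>
        isClosed_eq (hg.continuous_coord a _) continuous_const
    have hSlt : ∀ j j', j < j' → Disjoint (S j) (S j') := fun j j' hj => by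
      rw [Set.disjoint_left]
      intro w h1 h2
      have e1 := h1 (n + j) (by push_cast; omega)
      have e2 := h2 (n + j) (by push_cast; omega)
      rw [e1] at e2
      simp only [s] at e2
      rw [if_neg (by push_cast; omega), if_pos (by push_cast; rfl), if_neg (by push_cast; omega),
        if_neg (by push_cast; omega)] at e2
      exact hca e2
    have hSd : Pairwise (Function.onFun Disjoint S) := fun j j' hj => by
      rcases hj.lt_or_gt with h | h
      · exact hSlt _ _ h
      · exact (hSlt _ _ h).symm
    have hsum : ∑' j, μ (S j) ≠ ⊤ := by
      rw [← measure_iUnion hSd hSm]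
      exact measure_ne_top _ _
    obtain ⟨j, hj⟩ := ((ENNReal.tendsto_atTop_zero_of_tsum_ne_top hsum).eventually
      (ge_mem_nhds (pos_iff_ne_zero.2 hε2))).exists
    have hk : (1 : ℤ) ≤ n + j + 1 := by omega
    have hh := good_flip hk (hs j)
    refine ⟨g.trans (flipHomeo hk (hs j)), hg.trans hh, ?_⟩
    calc _ ≤ μ ({w | ¬ ∀ b ∈ F, ∀ i ≤ n, omegaAct A g (w.1 b) i = z.1 b i} ∪ S j) := by
          refine measure_mono fun w hw => ?_
          by_contra hc
          rw [Set.mem_union, not_or] at hc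
          obtain ⟨hc1, hc2⟩ := hc
          have hc1 := not_not.1 hc1
          refine hw fun b hb i hi => ?_
          rw [omegaAct_trans hg hh (w.2 b)]
          rcases eq_or_ne b a with rfl | hba
          · rcases i with _ | i
            · rw [(hh.mapsTo (hg.mapsTo (w.2 b))).1, (z.2 b).1]
            · rw [omegaAct_flip_same hk (hs j) (hg.mapsTo (w.2 b)) hc2 i (by omega)]
              simp only [s]
              rw [if_pos (by omega), Int.toNat_natCast]
          · rw [omegaAct_flip_other hk (hs j) hba (hg.mapsTo (w.2 b)) i (by omega)]
            exact hc1 b (Finset.mem_of_mem_insert_of_ne hb hba) i hi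
      _ ≤ ε / 2 + ε / 2 := (measure_union_le _ _).trans (add_le_add hμ hj)
      _ = ε := ENNReal.add_halves ε

end Good

/-- The diagonal action of `G*` on `∏_{a ∈ A} Ω^a` is strongly proximal:
every Borel probability measure can be pushed by a sequence of elements of `G*`
to converge weak* to a point mass. -/
theorem gstar_diag_stronglyProximal
    (A : Type*) [Fintype A] [TopologicalSpace A] [DiscreteTopology A]
    (hA : 2 ≤ Fintype.card A)
    [MeasurableSpace (ProdOmega A)] [BorelSpace (ProdOmega A)] :
    ∀ μ : Measure (ProdOmega A), IsProbabilityMeasure μ →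
      ∃ (g : ℕ → (ℤ → A) ≃ₜ (ℤ → A)) (hg : ∀ k, g k ∈ Gstar A) (z : ProdOmega A),
        ∀ f : BoundedContinuousFunction (ProdOmega A) ℝ,
          Tendsto (fun k => ∫ w, f (diagAct A (g k) (hg k) w) ∂μ)
            atTop (nhds (f z)) := by
  intro μ hμ
  have : Nontrivial A := Fintype.one_lt_card_iff_nontrivial.1 hA
  -- a probability measure lives on a nonempty space; any point can serve as the limit
  obtain ⟨z⟩ : Nonempty (ProdOmega A) := nonempty_of_isProbabilityMeasure μ
  obtain ⟨ε, hε, hsum⟩ := ENNReal.exists_pos_sum_of_countable' (ε := 1) one_ne_zero ℕ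
  choose g hg hbad using fun n : ℕ =>
    exists_good μ z (n + 1) (by omega) Finset.univ (ε n) (hε n).ne'
  refine ⟨g, fun k => (hg k).mem_Gstar, z, fun f => ?_⟩
  have hae := ae_eventually_notMem (μ := μ)
    (ne_top_of_le_ne_top (hsum.trans ENNReal.one_lt_top).ne (ENNReal.tsum_le_tsum hbad))
  have hlim : ∀ᵐ w ∂μ, Tendsto (fun k => f (diagAct A (g k) (hg k).mem_Gstar w)) atTop
      (nhds (f z)) := by
    filter_upwards [hae] with w hw
    refine (f.continuous.tendsto z).comp ?_
    rw [tendsto_subtype_rng, tendsto_pi_nhds]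
    intro b
    rw [tendsto_pi_nhds]
    intro i
    rw [nhds_discrete A, tendsto_pure]
    filter_upwards [hw, eventually_ge_atTop i] with k hk hik
    exact not_not.1 hk b (Finset.mem_univ b) i (by omega)
  have := tendsto_integral_of_dominated_convergence (μ := μ)
    (F := fun k w => f (diagAct A (g k) (hg k).mem_Gstar w)) (f := fun _ => f z)
    (fun _ => ‖f‖)
    (fun k => (f.continuous.comp (hg k).continuous_diagAct).measurable.aestronglyMeasurable)
    (integrable_const _)
    (fun k => Eventually.of_forall fun w => f.norm_coe_le_norm _) hlim
  simpa using this
end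

section
/- Let A be a finite alphabet with |A| ≥ 2. The kernel of the action of Aut(A^ℤ) on Ω is exactly Σ(A^ℤ): an automorphism g ∈ Aut(A^ℤ) satisfies g·x = x for all x ∈ Ω if and only if g is a power of the shift σ. In particular the action factors through Aut(A^ℤ)/Σ(A^ℤ) and the induced action of this quotient on Ω is faithful. -/
/-!
Why the kernel consists of shifts.  If `g` acts trivially on `Ω`, then for every configuration `y`
whose constant prefix ends exactly at `0` (`PrefixEndsAtZero y`), `g y` is a translate
`m ↦ y (m - k)`, where `k` may depend on `y`; continuity of `g` at the finitely many constant
configurations bounds `k` below uniformly (`exists_translate`).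

A single `k` then works for all of `A^ℤ` (`translate_uniform`).  Fix one such `y`, with its `k`, and
an arbitrary configuration `y'`; let `w p` agree with `y` left of `p` and with `y'`, moved right by
`2p`, from `p` on.  Then `w p → y`, which forces `w p` to be translated by the same `k` as `y` once
`p` is large, whereas `σ ^ (2p) (w p) → y'`, so `g y'` is the translate of `y'` by `k`.  Hence
`g = σ ^ (-k)`.
-/

open Filter MeasureTheory

theorem shiftHomeo_zpow_apply {A : Type*} [TopologicalSpace A] (j : ℤ) (y : ℤ → A) (m : ℤ) :
    (shiftHomeo A ^ j) y m = y (m + j) := by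
  induction j using Int.induction_on generalizing y m with
  | zero => rw [zpow_zero, add_zero]; rfl
  | succ i ih =>
    rw [zpow_add, zpow_one]
    change (shiftHomeo A ^ (i : ℤ)) (shiftHomeo A y) m = _
    rw [ih]
    change y (m + i + 1) = _
    congr 1
    ring
  | pred i ih =>
    rw [zpow_sub, zpow_one]
    change (shiftHomeo A ^ (-(i : ℤ))) ((shiftHomeo A).symm y) m = _
    rw [ih]
    change y (m + -i - 1) = _
    congr 1
    ring

theorem ShiftAut.apply_translate {A : Type*} [TopologicalSpace A] {g : (ℤ → A) ≃ₜ (ℤ → A)}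
    (hg : g ∈ ShiftAut A) (j : ℤ) (y : ℤ → A) (m : ℤ) :
    g (fun i => y (i + j)) m = g y (m + j) := by
  have h1 : Commute (shiftHomeo A) g := Subgroup.mem_centralizer_iff.1 hg _ rfl
  have h2 : (shiftHomeo A ^ j) * g = g * shiftHomeo A ^ j := h1.zpow_left j
  have h3 : (shiftHomeo A ^ j) (g y) = g ((shiftHomeo A ^ j) y) :=
    congrArg (fun f : (ℤ → A) ≃ₜ (ℤ → A) => f y) h2
  have h4 : (shiftHomeo A ^ j) y = fun i => y (i + j) :=
    funext fun i => shiftHomeo_zpow_apply j y i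
  rw [← h4, ← h3, shiftHomeo_zpow_apply]

/-- The configurations whose maximal constant prefix ends at coordinate `0`; these are exactly the
images `φ x` of the points `x` of `Ω`. -/
def PrefixEndsAtZero {A : Type*} (y : ℤ → A) : Prop :=
  y 0 ≠ y 1 ∧ ∀ m ≤ 0, y m = y 0

theorem phiMap_restrict {A : Type*} {y : ℤ → A} (hy : PrefixEndsAtZero y) :
    phiMap A (fun n : ℕ => y n) = y := by
  funext m
  unfold phiMap
  split_ifs with h
  · exact (hy.2 m h).symm
  · change y (m.toNat : ℤ) = y m
    rw [Int.toNat_of_nonneg (by omega)]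

theorem prefixEndsAtZero_phiMap {A : Type*} {x : ℕ → A} (hx : x ∈ OmegaSet A) :
    PrefixEndsAtZero (phiMap A x) := by
  refine ⟨?_, fun m hm => ?_⟩
  · have hx' : x 0 ≠ x 1 := hx
    simpa [phiMap] using hx'
  · simp [phiMap, hm]

theorem tendsto_config_of_eventually {A : Type*} [TopologicalSpace A] {w : ℕ → ℤ → A}
    {y : ℤ → A} (h : ∀ m, ∀ᶠ p in atTop, w p m = y m) : Tendsto w atTop (nhds y) :=
  tendsto_pi_nhds.2 fun m => tendsto_const_nhds.congr' ((h m).mono fun _ hp => hp.symm)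

theorem eventually_of_tendsto_config {A : Type*} [TopologicalSpace A] [DiscreteTopology A]
    {w : ℕ → ℤ → A} {y : ℤ → A} (h : Tendsto w atTop (nhds y)) (m : ℤ) :
    ∀ᶠ p in atTop, w p m = y m := by
  have := tendsto_pi_nhds.1 h m
  rwa [nhds_discrete, tendsto_pure] at this

/-- The image under `g` of a left-constant configuration is left-constant, on a half-line that is
uniform because there are only finitely many symbols. -/
theorem exists_const_prefix {A : Type*} [Finite A] [TopologicalSpace A] [DiscreteTopology A]
    {g : (ℤ → A) ≃ₜ (ℤ → A)} (hg : g ∈ ShiftAut A) :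
    ∃ R : ℕ, ∀ y : ℤ → A, PrefixEndsAtZero y →
      ∀ m ≤ -(R : ℤ), g y m = g (fun _ => y 0) 0 := by
  have key : ∀ a : A, ∀ᶠ R : ℕ in atTop, ∀ y : ℤ → A,
      (∀ m ≤ (R : ℤ), y m = a) → g y 0 = g (fun _ => a) 0 := by
    intro a
    have hopen : IsOpen {y : ℤ → A | g y 0 = g (fun _ => a) 0} :=
      (isOpen_discrete {g (fun _ => a) 0}).preimage ((continuous_apply 0).comp g.continuous)
    obtain ⟨I, u, hu, hsub⟩ := isOpen_pi_iff.1 hopen (fun _ => a) rfl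
    have hI : ∀ᶠ R : ℕ in atTop, ∀ i ∈ I, i ≤ (R : ℤ) :=
      (Finset.eventually_all I).2 fun i _ =>
        (eventually_ge_atTop i.toNat).mono fun R hR => by omega
    refine hI.mono fun R hR y hy => hsub fun i hi => ?_
    rw [hy i (hR i hi)]
    exact (hu i hi).2
  obtain ⟨R, hR⟩ := (eventually_all.2 key).exists
  refine ⟨R, fun y hy m hm => ?_⟩
  have h := hR (y 0) (fun i => y (i + m)) fun i hi => hy.2 _ (by omega)
  rwa [ShiftAut.apply_translate hg, zero_add] at h

/-- Trivial action on `Ω` means that each left-constant configuration is translated by `g`, and the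
size of the translation is bounded below. -/
theorem exists_translate {A : Type*} [Finite A] [TopologicalSpace A] [DiscreteTopology A]
    {g : (ℤ → A) ≃ₜ (ℤ → A)} (hg : g ∈ ShiftAut A)
    (h : ∀ x ∈ OmegaSet A, omegaAct A g x = x) :
    ∃ R : ℕ, ∀ y : ℤ → A, PrefixEndsAtZero y →
      ∃ k : ℤ, -(R : ℤ) ≤ k ∧ ∀ m, g y m = y (m - k) := by
  obtain ⟨R, hR⟩ := exists_const_prefix hg
  refine ⟨R, fun y hy => ?_⟩
  have hx := h (fun n : ℕ => y n) (by simpa [OmegaSet] using hy.1)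
  have hval : ∀ n : ℕ, g y (ellVal A (g y) + n) = y n := fun n => by
    have := congrFun hx n
    simpa only [omegaAct, phiMap_restrict hy] using this
  set k := ellVal A (g y) with hk
  have hlow : ∀ m ∈ {m : ℤ | g y m ≠ g y (m + 1)}, -(R : ℤ) ≤ m := by
    intro m hm
    by_contra hlt
    exact hm ((hR y hy m (by omega)).trans (hR y hy (m + 1) (by omega)).symm)
  have h0 : g y k = y 0 := by simpa using hval 0
  have h1 : g y (k + 1) = y 1 := by simpa using hval 1
  have hkmem : k ∈ {m : ℤ | g y m ≠ g y (m + 1)} := by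
    change g y k ≠ g y (k + 1)
    rw [h0, h1]
    exact hy.1
  refine ⟨k, hlow k hkmem, fun m => ?_⟩
  rcases le_total k m with hkm | hmk
  · have := hval (m - k).toNat
    rwa [Int.toNat_of_nonneg (by omega), add_sub_cancel] at this
  · rw [hy.2 (m - k) (by omega)]
    -- Left of `k` there is no change of symbol, because `k` is the infimum of these changes.
    induction m, hmk using Int.leInductionDown with
    | base => exact h0
    | pred n hn ih =>
      by_contra hne
      have hmem : n - 1 ∈ {m : ℤ | g y m ≠ g y (m + 1)} := by
        change g y (n - 1) ≠ g y (n - 1 + 1)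
        rwa [sub_add_cancel, ih]
      have : k ≤ n - 1 := csInf_le ⟨-(R : ℤ), hlow⟩ hmem
      omega

/-- Suppose `g` translates each left-constant configuration by some integer, bounded below by `-R`.
If the integer for one such configuration `y` is `k`, then `g` translates every
configuration `y'` by `k`, since `y'` can be planted far to the right in a perturbation of `y`. -/
theorem translate_uniform {A : Type*} [TopologicalSpace A] [DiscreteTopology A]
    {g : (ℤ → A) ≃ₜ (ℤ → A)} (hg : g ∈ ShiftAut A) {R : ℕ}
    (h : ∀ y : ℤ → A, PrefixEndsAtZero y →
      ∃ k : ℤ, -(R : ℤ) ≤ k ∧ ∀ m, g y m = y (m - k))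
    {y : ℤ → A} (hy : PrefixEndsAtZero y) {k : ℤ} (hk : ∀ m, g y m = y (m - k))
    (y' : ℤ → A) (m : ℤ) : g y' m = y' (m - k) := by
  let w : ℕ → ℤ → A := fun p i => if i < p then y i else y' (i - 2 * p)
  have hwlt : ∀ (p : ℕ) (i : ℤ), i < p → w p i = y i := fun p i hi => if_pos hi
  have hwge : ∀ (p : ℕ) (i : ℤ), (p : ℤ) ≤ i → w p i = y' (i - 2 * p) :=
    fun p i hi => if_neg (by omega)
  have hw : Tendsto w atTop (nhds y) := tendsto_config_of_eventually fun i =>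
    (eventually_ge_atTop (i + 1).toNat).mono fun p hp => hwlt p i (by omega)
  have hw' : Tendsto (fun p i => w p (i + 2 * p)) atTop (nhds y') :=
    tendsto_config_of_eventually fun i =>
      (eventually_ge_atTop (-i).toNat).mono fun p hp => by
        rw [hwge p _ (by omega), add_sub_cancel_right]
  have hgw' := eventually_of_tendsto_config ((g.continuous.tendsto y').comp hw') m
  have hgw := eventually_of_tendsto_config ((g.continuous.tendsto y).comp hw)
  -- A change of symbol of `g (w p)` cannot occur left of `-R`, so agreement with `g y` on
  -- `[-R, k + 1]` already determines the translation of `w p`.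
  have hwin : ∀ᶠ p in atTop, ∀ i ∈ Finset.Icc (-(R : ℤ)) (k + 1), g (w p) i = g y i :=
    (Finset.eventually_all _).2 fun i _ => hgw i
  have hlim := eventually_of_tendsto_config hw' (m - k)
  obtain ⟨p, hp, hp2, hpm, hpl, hpk, hpk1⟩ := (hwin.and ((eventually_ge_atTop 2).and
    (hgw'.and (hlim.and ((hgw k).and (hgw (k + 1))))))).exists
  simp only [Function.comp_apply] at hpm hpk hpk1
  have hw0 : w p 0 = y 0 := hwlt p 0 (by omega)
  have hw1 : w p 1 = y 1 := hwlt p 1 (by omega)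
  have hwp : PrefixEndsAtZero (w p) :=
    ⟨by rw [hw0, hw1]; exact hy.1, fun i hi => by
      rw [hw0, hwlt p i (by omega)]; exact hy.2 i hi⟩
  obtain ⟨q, hqR, hq⟩ := h (w p) hwp
  have hqk : q = k := by
    apply le_antisymm
    · by_contra hlt
      apply hy.1
      have e0 : g (w p) k = w p 0 := by rw [hq]; exact hwp.2 _ (by omega)
      have e1 : g (w p) (k + 1) = w p 0 := by rw [hq]; exact hwp.2 _ (by omega)
      have e2 := e0.symm.trans hpk
      have e3 := e1.symm.trans hpk1
      rw [hk, sub_self] at e2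
      rw [hk, add_sub_cancel_left] at e3
      exact e2.symm.trans e3
    · by_contra hlt
      apply hwp.1
      have e0 := hp q (Finset.mem_Icc.2 ⟨hqR, by omega⟩)
      have e1 := hp (q + 1) (Finset.mem_Icc.2 ⟨by omega, by omega⟩)
      rw [hq, hk, sub_self, hy.2 (q - k) (by omega)] at e0
      rw [hq, hk, add_sub_cancel_left, hy.2 (q + 1 - k) (by omega)] at e1
      exact e0.trans e1.symm
  rw [ShiftAut.apply_translate hg, hq, hqk] at hpm
  rw [← hpm, ← hpl]
  congr 1
  ring

/-- Powers of the shift act trivially: `σ ^ j` moves the end of the constant prefix to `-j`. -/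
theorem omegaAct_shift_zpow {A : Type*} [TopologicalSpace A] (j : ℤ) {x : ℕ → A}
    (hx : x ∈ OmegaSet A) : omegaAct A (shiftHomeo A ^ j) x = x := by
  have hy := prefixEndsAtZero_phiMap hx
  have hell : ellVal A ((shiftHomeo A ^ j) (phiMap A x)) = -j := by
    refine IsLeast.csInf_eq ⟨?_, fun m hm => ?_⟩
    · simp only [Set.mem_ofPred_eq, shiftHomeo_zpow_apply]
      rw [neg_add_cancel, show -j + 1 + j = 1 by ring]
      exact hy.1
    · simp only [Set.mem_ofPred_eq, shiftHomeo_zpow_apply] at hm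
      by_contra hlt
      exact hm ((hy.2 _ (by omega)).trans (hy.2 _ (by omega)).symm)
  funext n
  unfold omegaAct
  rw [hell, shiftHomeo_zpow_apply, show -j + (n : ℤ) + j = n by ring]
  rcases Nat.eq_zero_or_pos n with rfl | hn
  · simp [phiMap]
  · have : n ≠ 0 := by omega
    simp [phiMap, this]

/-- The kernel of the action of `Aut(A^ℤ)` on `Ω` is exactly `Σ(A^ℤ)`:
an automorphism acts trivially on `Ω` if and only if it is a power of the
shift.  (In particular the action descends to a faithful action of
`Aut(A^ℤ)/Σ(A^ℤ)` on `Ω`.) -/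
theorem omegaAct_kernel_eq_shifts
    (A : Type*) [Fintype A] [TopologicalSpace A] [DiscreteTopology A]
    (hA : 2 ≤ Fintype.card A) :
    ∀ g : (ℤ → A) ≃ₜ (ℤ → A), g ∈ ShiftAut A →
      ((∀ x ∈ OmegaSet A, omegaAct A g x = x) ↔
        g ∈ Subgroup.zpowers (shiftHomeo A)) := by
  intro g hg
  have : Nontrivial A := Fintype.one_lt_card_iff_nontrivial.1 hA
  constructor
  · intro h
    obtain ⟨R, hR⟩ := exists_translate hg h
    obtain ⟨a, b, hab⟩ := exists_pair_ne A
    have hy : PrefixEndsAtZero fun i : ℤ => if i ≤ 0 then a else b :=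
      ⟨by simpa using hab, fun m hm => by simp [hm]⟩
    obtain ⟨k, -, hk⟩ := hR _ hy
    refine Subgroup.mem_zpowers_iff.2 ⟨-k, Homeomorph.ext fun y => funext fun m => ?_⟩
    rw [shiftHomeo_zpow_apply, translate_uniform hg hR hy hk, sub_eq_add_neg]
  · intro h x hx
    obtain ⟨j, rfl⟩ := Subgroup.mem_zpowers_iff.1 h
    exact omegaAct_shift_zpow j hx
end

section
/- Fix d ≥ 1 and k ∈ ℕ with k ≥ 1. Let U_k ⊆ ℤ^d be the ℤ-span of the vectors r_1, …, r_{d−1}, where r_i = e_i + k·e_{i+1} (e_1, …, e_d the standard basis of ℤ^d). Then every nonzero element u ∈ U_k has Euclidean norm strictly greater than k. -/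
/-!
Write `u ∈ U_k` as `∑ aᵢ rᵢ`, with coefficients shifted by one: `b (i + 1) = aᵢ`, `b 0 = 0`, and
`b n = 0` for `n ≥ d`. Then `u j = b (j + 1) + k * b j` for every `j`. If `u ≠ 0`, then `b`
is nonzero somewhere, so it has a step `b p = 0`, `b (p + 1) ≠ 0`, and a greatest index `q` with
`b q ≠ 0`; here `p < q < d`. At these
coordinates nothing can cancel: `u p = b (p + 1)` is a nonzero integer and `u q = k * b q` is a
nonzero multiple of `k`. Hence `‖u‖² ≥ 1 + k² > k²`.
-/

open scoped BigOperators

/-- The vector `r_i = e_i + k·e_{i+1}` in `ℤ^d` (zero-indexed: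
for `i < d - 1`, `rVec d k i = e_i + k e_{i+1}`; `rVec d k (d-1) = e_{d-1}`). -/
def rVec (d k : ℕ) (i : ℕ) : Fin d → ℤ :=
  fun j => if (j : ℕ) = i then 1 else if (j : ℕ) = i + 1 then (k : ℤ) else 0

/-- `U_k`: the `ℤ`-span of `r_0, …, r_{d-2}` in `ℤ^d`. -/
def UkSpan (d k : ℕ) : Submodule ℤ (Fin d → ℤ) :=
  Submodule.span ℤ {v | ∃ i : ℕ, i < d - 1 ∧ v = rVec d k i}

/-- The Euclidean norm on `ℤ^d`. -/
noncomputable def euclNorm (d : ℕ) (v : Fin d → ℤ) : ℝ :=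
  Real.sqrt (∑ j : Fin d, ((v j : ℝ)) ^ 2)

/-- Coordinates of an element of `U_k` in terms of its coefficient sequence: `b (i + 1)` is the
coefficient of `rVec d k i`, and `b` is padded by zeros at `0` and from `d` on. -/
lemma UkSpan_exists_coeff {d k : ℕ} {u : Fin d → ℤ} (hu : u ∈ UkSpan d k) :
    ∃ b : ℕ → ℤ, b 0 = 0 ∧ (∀ n, d ≤ n → b n = 0) ∧
      ∀ j : Fin d, u j = b (j + 1) + k * b j := by
  unfold UkSpan at hu
  induction hu using Submodule.span_induction with
  | mem x hx =>
    obtain ⟨i, hi, rfl⟩ := hx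
    refine ⟨fun n => if n = i + 1 then 1 else 0, by simp, fun n hn => ?_, fun j => ?_⟩
    · have : n ≠ i + 1 := by omega
      simp [this]
    · unfold rVec
      by_cases h1 : (j : ℕ) = i
      · simp [h1]
      · by_cases h2 : (j : ℕ) = i + 1 <;> simp [h1, h2]
  | zero => exact ⟨fun _ => 0, by simp⟩
  | add x y _ _ hx hy =>
    obtain ⟨b, hb0, hbd, hb⟩ := hx
    obtain ⟨c, hc0, hcd, hc⟩ := hy
    refine ⟨fun n => b n + c n, by simp [hb0, hc0],
      fun n hn => by simp [hbd n hn, hcd n hn], fun j => ?_⟩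
    simp only [Pi.add_apply, hb, hc]
    ring
  | smul a x _ hx =>
    obtain ⟨b, hb0, hbd, hb⟩ := hx
    refine ⟨fun n => a * b n, by simp [hb0], fun n hn => by simp [hbd n hn], fun j => ?_⟩
    simp only [Pi.smul_apply, smul_eq_mul, hb]
    ring

/-- The integer form of the norm bound. -/
lemma UkSpan_sq_lt_sum_sq {d k : ℕ} {u : Fin d → ℤ} (hu : u ∈ UkSpan d k) (hne : u ≠ 0) :
    (k : ℤ) ^ 2 < ∑ j : Fin d, u j ^ 2 := by
  obtain ⟨b, hb0, hbd, hb⟩ := UkSpan_exists_coeff hu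
  have hex : ∃ n, b n ≠ 0 := by
    by_contra! h
    exact hne (funext fun j => by simp [hb, h])
  obtain ⟨p, hp, hp0⟩ : ∃ p, b (p + 1) ≠ 0 ∧ b p = 0 := by
    by_contra! h
    obtain ⟨n, hn⟩ := hex
    refine hn ?_
    clear hn
    induction n with
    | zero => exact hb0
    | succ n ih => exact by_contra fun hc => h n hc ih
  have hpd : p + 1 < d := by
    by_contra! h
    exact hp (hbd _ h)
  set q := Nat.findGreatest (fun n => b n ≠ 0) d
  have hq : b q ≠ 0 := Nat.findGreatest_spec (P := fun n => b n ≠ 0) hpd.le hp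
  have hpq : p + 1 ≤ q := Nat.le_findGreatest hpd.le hp
  have hqd : q < d := by
    by_contra! h
    exact hq (hbd _ h)
  have hq1 : b (q + 1) = 0 := by
    by_contra hc
    exact Nat.findGreatest_is_greatest (P := fun n => b n ≠ 0) (Nat.lt_succ_self q) hqd hc
  have hup : u ⟨p, by omega⟩ = b (p + 1) := by simp [hb, hp0]
  have huq : u ⟨q, hqd⟩ = k * b q := by simp [hb, hq1]
  have hpair : u ⟨p, by omega⟩ ^ 2 + u ⟨q, hqd⟩ ^ 2 ≤ ∑ j : Fin d, u j ^ 2 := by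
    have hpq' : (⟨p, by omega⟩ : Fin d) ≠ ⟨q, hqd⟩ := by
      simp only [ne_eq, Fin.mk.injEq]
      omega
    rw [← Finset.sum_pair (f := fun j => u j ^ 2) hpq']
    exact Finset.sum_le_sum_of_subset_of_nonneg (Finset.subset_univ _)
      fun j _ _ => sq_nonneg (u j)
  rw [hup, huq] at hpair
  have h1 : 0 < b (p + 1) ^ 2 := by positivity
  have h2 : 0 < b q ^ 2 := by positivity
  nlinarith [mul_le_mul_of_nonneg_left (Int.add_one_le_iff.mpr h2) (sq_nonneg (k : ℤ))]

/-- Every nonzero element of `U_k` has Euclidean norm strictly greater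
than `k`. -/
theorem ukSpan_norm_gt
    (d k : ℕ) (hd : 1 ≤ d) (hk : 1 ≤ k)
    (u : Fin d → ℤ) (hu : u ∈ UkSpan d k) (hne : u ≠ 0) :
    (k : ℝ) < euclNorm d u := by
  unfold euclNorm
  apply Real.lt_sqrt_of_sq_lt
  exact_mod_cast UkSpan_sq_lt_sum_sq hu hne
end

section
/- Every group G has an amenable radical: the subgroup generated by all normal amenable subgroups of G is itself a normal amenable subgroup of G, and hence is the unique maximal normal amenable subgroup of G, containing every normal amenable subgroup. -/
/-!
The union of all normal amenable subgroups generates `R = amenableRadical G`, so a mean on `R` is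
`R`-invariant as soon as it is invariant under each normal amenable subgroup `N` of `G`.

For finitely many such `N`, an invariant mean is built inductively (`exists_mean_finset`): given a
mean `m` on `R` and an invariant mean `μ` on `N`, average the translates of `m` over `N`,
`f ↦ μ (n ↦ m (x ↦ f (n * x)))`. The result is `N`-invariant, and it keeps the invariance of `m`
under any normal subgroup `M`, since `h * n = n * (n⁻¹ * h * n)` with `n⁻¹ * h * n ∈ M` for `h ∈ M`
(`exists_mean_step`).

The family of all normal amenable subgroups is handled by compactness: the limit, along an
ultrafilter on the directed set of finite families, of the means just built is invariant under every
`N`.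
-/

/-- A group is amenable if there is a left-invariant mean on its
bounded real-valued functions. -/
def IsAmenable (G : Type*) [Group G] : Prop :=
  ∃ m : (G → ℝ) → ℝ,
    (∀ f₁ f₂ : G → ℝ, (∃ C, ∀ x, |f₁ x| ≤ C) → (∃ C, ∀ x, |f₂ x| ≤ C) →
      m (f₁ + f₂) = m f₁ + m f₂) ∧
    (∀ (c : ℝ) (f : G → ℝ), (∃ C, ∀ x, |f x| ≤ C) → m (c • f) = c * m f) ∧
    (∀ f : G → ℝ, (∃ C, ∀ x, |f x| ≤ C) → (∀ x, 0 ≤ f x) → 0 ≤ m f) ∧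
    m (fun _ => 1) = 1 ∧
    (∀ (g : G) (f : G → ℝ), (∃ C, ∀ x, |f x| ≤ C) →
      m (fun x => f (g * x)) = m f)

/-- The subgroup of `G` generated by all normal amenable subgroups of `G`. -/
def amenableRadical (G : Type*) [Group G] : Subgroup G :=
  Subgroup.closure {g : G | ∃ N : Subgroup G, N.Normal ∧ IsAmenable N ∧ g ∈ N}

/-- Boundedness of a real-valued function, in the form used by `IsAmenable`. -/
def BddFun {X : Type*} (f : X → ℝ) : Prop := ∃ C, ∀ x, |f x| ≤ C

/-- A mean on the bounded real-valued functions on `X`; values at unbounded functions are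
unconstrained. -/
structure IsMean {X : Type*} (m : (X → ℝ) → ℝ) : Prop where
  add : ∀ f₁ f₂ : X → ℝ, BddFun f₁ → BddFun f₂ → m (f₁ + f₂) = m f₁ + m f₂
  smul : ∀ (c : ℝ) (f : X → ℝ), BddFun f → m (c • f) = c * m f
  nonneg : ∀ f : X → ℝ, BddFun f → (∀ x, 0 ≤ f x) → 0 ≤ m f
  one : m (fun _ => 1) = 1

/-- The functional `m` is unchanged by left translation by `g`. -/
def InvBy {X : Type*} [Mul X] (m : (X → ℝ) → ℝ) (g : X) : Prop :=
  ∀ f : X → ℝ, BddFun f → m (fun x => f (g * x)) = m f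

theorem isAmenable_iff (G : Type*) [Group G] :
    IsAmenable G ↔ ∃ m : (G → ℝ) → ℝ, IsMean m ∧ ∀ g, InvBy m g :=
  ⟨fun ⟨m, h1, h2, h3, h4, h5⟩ => ⟨m, ⟨h1, h2, h3, h4⟩, h5⟩,
    fun ⟨m, ⟨h1, h2, h3, h4⟩, h5⟩ => ⟨m, h1, h2, h3, h4, h5⟩⟩

theorem BddFun.add {X : Type*} {f g : X → ℝ} (hf : BddFun f) (hg : BddFun g) :
    BddFun (f + g) := by
  obtain ⟨C, hC⟩ := hf
  obtain ⟨D, hD⟩ := hg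
  exact ⟨C + D, fun x => (abs_add_le _ _).trans (add_le_add (hC x) (hD x))⟩

theorem BddFun.smul {X : Type*} {f : X → ℝ} (c : ℝ) (hf : BddFun f) : BddFun (c • f) := by
  obtain ⟨C, hC⟩ := hf
  refine ⟨|c| * C, fun x => ?_⟩
  rw [Pi.smul_apply, smul_eq_mul, abs_mul]
  exact mul_le_mul_of_nonneg_left (hC x) (abs_nonneg c)

theorem bddFun_one {X : Type*} : BddFun (fun _ : X => (1 : ℝ)) := ⟨1, fun _ => by simp⟩

theorem BddFun.comp {X Y : Type*} {f : X → ℝ} (hf : BddFun f) (g : Y → X) :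
    BddFun (fun y => f (g y)) := by
  obtain ⟨C, hC⟩ := hf
  exact ⟨C, fun y => hC (g y)⟩

theorem IsMean.abs_le {X : Type*} {m : (X → ℝ) → ℝ} (hm : IsMean m) {f : X → ℝ} {C : ℝ}
    (hC : ∀ x, |f x| ≤ C) : |m f| ≤ C := by
  have hf : BddFun f := ⟨C, hC⟩
  have h1 (c : ℝ) : m (C • (fun _ => 1) + c • f) = C + c * m f := by
    rw [hm.add _ _ (bddFun_one.smul C) (hf.smul c), hm.smul _ _ bddFun_one, hm.smul _ _ hf,
      hm.one, mul_one]
  have h2 (c : ℝ) (hc : ∀ x, 0 ≤ C + c * f x) : 0 ≤ C + c * m f := by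
    rw [← h1]
    exact hm.nonneg _ ((bddFun_one.smul C).add (hf.smul c)) fun x => by simpa using hc x
  have h3 := h2 1 fun x => by linarith [(_root_.abs_le.1 (hC x)).1]
  have h4 := h2 (-1) fun x => by linarith [(_root_.abs_le.1 (hC x)).2]
  exact _root_.abs_le.2 ⟨by linarith, by linarith⟩

/-- Averaging a mean on `R` over an amenable subgroup `N ≤ R` makes it `N`-invariant, and preserves
its invariance under every normal subgroup. -/
theorem exists_mean_step {G : Type*} [Group G] {R N : Subgroup G} (hNR : N ≤ R)
    (hN : IsAmenable N) {m : (R → ℝ) → ℝ} (hm : IsMean m) :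
    ∃ m' : (R → ℝ) → ℝ, IsMean m' ∧ (∀ h : R, (h : G) ∈ N → InvBy m' h) ∧
      ∀ M : Subgroup G, M.Normal → (∀ h : R, (h : G) ∈ M → InvBy m h) →
        ∀ h : R, (h : G) ∈ M → InvBy m' h := by
  obtain ⟨μ, hμ, hinv⟩ := (isAmenable_iff N).1 hN
  let ι : N → R := fun n => ⟨n, hNR n.2⟩
  have hb (f : R → ℝ) (hf : BddFun f) : BddFun (fun n : N => m fun x => f (ι n * x)) := by
    obtain ⟨C, hC⟩ := hf
    exact ⟨C, fun n => hm.abs_le fun x => hC _⟩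
  refine ⟨fun f => μ fun n => m fun x => f (ι n * x), ⟨?_, ?_, ?_, ?_⟩, ?_, ?_⟩
  · intro f₁ f₂ h₁ h₂
    rw [← hμ.add _ _ (hb f₁ h₁) (hb f₂ h₂)]
    congr 1
    funext n
    exact hm.add _ _ (h₁.comp _) (h₂.comp _)
  · intro c f hf
    rw [← hμ.smul _ _ (hb f hf)]
    congr 1
    funext n
    exact hm.smul _ _ (hf.comp _)
  · intro f hf h0
    exact hμ.nonneg _ (hb f hf) fun n => hm.nonneg _ (hf.comp _) fun x => h0 _
  · simp only [hm.one, hμ.one]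
  · intro h hh f hf
    have key := hinv ⟨h, hh⟩ _ (hb f hf)
    refine Eq.trans ?_ key
    change (μ fun n => m fun x => f (h * (ι n * x))) = _
    congr 1
    funext n
    congr 1
    funext x
    rw [← mul_assoc]
    rfl
  · intro M hM hinvM h hh f hf
    change (μ fun n => m fun x => f (h * (ι n * x))) = μ fun n => m fun x => f (ι n * x)
    congr 1
    funext n
    have hconj : (((ι n)⁻¹ * h * ι n : R) : G) ∈ M := by
      simpa using hM.conj_mem h hh (ι n : G)⁻¹
    have key := hinvM _ hconj (fun x => f (ι n * x)) (hf.comp _)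
    refine Eq.trans ?_ key
    congr 1
    funext x
    congr 1
    group

theorem exists_mean_finset {G : Type*} [Group G] {R : Subgroup G}
    (s : Finset {N : Subgroup G // N.Normal ∧ IsAmenable N ∧ N ≤ R}) :
    ∃ m : (R → ℝ) → ℝ, IsMean m ∧ ∀ N ∈ s, ∀ h : R, (h : G) ∈ N.1 → InvBy m h := by
  classical
  induction s using Finset.induction_on with
  | empty =>
    -- With no invariance required, evaluation at `1` is a mean.
    exact ⟨fun f => f 1, ⟨fun _ _ _ _ => rfl, fun _ _ _ => rfl, fun _ _ h => h 1, rfl⟩, by simp⟩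
  | insert N s _ ih =>
    obtain ⟨m, hm, hinv⟩ := ih
    obtain ⟨m', hm', h1, h2⟩ := exists_mean_step N.2.2.2 N.2.2.1 hm
    refine ⟨m', hm', fun M hM => ?_⟩
    rcases Finset.mem_insert.1 hM with rfl | hM
    · exact h1
    · exact h2 M.1 M.2.1 (hinv M hM)

/-- Compactness: an ultrafilter limit of the means for finite families is invariant under all
normal amenable subgroups contained in `R`. -/
theorem exists_mean_all {G : Type*} [Group G] (R : Subgroup G) :
    ∃ m : (R → ℝ) → ℝ, IsMean m ∧ ∀ N : Subgroup G, N.Normal → IsAmenable N → N ≤ R →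
      ∀ h : R, (h : G) ∈ N → InvBy m h := by
  classical
  let I := {N : Subgroup G // N.Normal ∧ IsAmenable N ∧ N ≤ R}
  choose m hm hinv using fun s : Finset I => exists_mean_finset (R := R) s
  let U : Ultrafilter (Finset I) := Ultrafilter.of Filter.atTop
  have hU : (U : Filter (Finset I)) ≤ Filter.atTop := Ultrafilter.of_le _
  have hlim (f : R → ℝ) : ∃ a : ℝ, BddFun f → Filter.Tendsto (fun s => m s f) U (nhds a) := by
    by_cases hf : BddFun f
    · obtain ⟨C, hC⟩ := hf
      obtain ⟨a, -, ha⟩ := (isCompact_Icc (a := -C) (b := C)).ultrafilter_le_nhds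
        (U.map fun s => m s f)
        (Filter.tendsto_principal.2 (Filter.Eventually.of_forall fun s =>
          _root_.abs_le.1 ((hm s).abs_le hC)))
      exact ⟨a, fun _ => ha⟩
    · exact ⟨0, fun h => absurd h hf⟩
  choose L hL using hlim
  refine ⟨L, ⟨?_, ?_, ?_, ?_⟩, ?_⟩
  · intro f₁ f₂ h₁ h₂
    refine tendsto_nhds_unique (hL _ (h₁.add h₂)) (((hL _ h₁).add (hL _ h₂)).congr fun s => ?_)
    exact ((hm s).add _ _ h₁ h₂).symm
  · intro c f hf
    refine tendsto_nhds_unique (hL _ (hf.smul c)) (((hL _ hf).const_mul c).congr fun s => ?_)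
    exact ((hm s).smul _ _ hf).symm
  · intro f hf h0
    exact ge_of_tendsto' (hL _ hf) fun s => (hm s).nonneg _ hf h0
  · exact tendsto_nhds_unique (hL _ bddFun_one)
      (tendsto_const_nhds.congr fun s => (hm s).one.symm)
  · intro N h1 h2 h3 h hh f hf
    refine tendsto_nhds_unique (hL _ (hf.comp _)) ((hL _ hf).congr' ?_)
    filter_upwards [hU (Filter.mem_atTop ({⟨N, h1, h2, h3⟩} : Finset I))] with s hs
    exact (hinv s ⟨N, h1, h2, h3⟩ (hs (Finset.mem_singleton_self _)) h hh f hf).symm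

/-- Every group has an amenable radical: the subgroup generated by all normal
amenable subgroups is itself normal and amenable, and contains every normal
amenable subgroup — so it is the unique maximal normal amenable subgroup. -/
theorem amenableRadical_spec (G : Type*) [Group G] :
    (amenableRadical G).Normal ∧ IsAmenable (amenableRadical G) ∧
      ∀ N : Subgroup G, N.Normal → IsAmenable N → N ≤ amenableRadical G := by
  have hle : ∀ N : Subgroup G, N.Normal → IsAmenable N → N ≤ amenableRadical G :=
    fun N h1 h2 g hg => Subgroup.subset_closure ⟨N, h1, h2, hg⟩
  refine ⟨?_, ?_, hle⟩
  · refine ⟨fun n hn g => ?_⟩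
    induction hn using Subgroup.closure_induction with
    | mem x hx =>
      obtain ⟨N, h1, h2, hx⟩ := hx
      exact hle N h1 h2 (h1.conj_mem x hx g)
    | one => simp
    | mul x y _ _ hx hy => simpa [mul_assoc] using mul_mem hx hy
    | inv x _ hx => simpa [mul_assoc] using inv_mem hx
  · obtain ⟨m, hm, hinv⟩ := exists_mean_all (amenableRadical G)
    refine (isAmenable_iff _).2 ⟨m, hm, fun ⟨g, hg⟩ => ?_⟩
    -- The elements fixing `m` are closed under the group operations.
    induction hg using Subgroup.closure_induction with
    | mem x hx =>
      obtain ⟨N, h1, h2, hx⟩ := hx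
      exact hinv N h1 h2 (hle N h1 h2) _ hx
    | one =>
      intro f _
      congr 1
      funext x
      exact congrArg f (one_mul x)
    | mul x y hx' hy' hx hy =>
      intro f hf
      refine Eq.trans ?_ ((hy _ (hf.comp (⟨x, hx'⟩ * ·))).trans (hx f hf))
      congr 1
      funext z
      exact congrArg f (mul_assoc (⟨x, hx'⟩ : amenableRadical G) ⟨y, hy'⟩ z)
    | inv x hx' hx =>
      intro f hf
      refine Eq.trans (hx _ (hf.comp ((⟨x, hx'⟩ : amenableRadical G)⁻¹ * ·))).symm ?_
      congr 1
      funext z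
      exact congrArg f (inv_mul_cancel_left (⟨x, hx'⟩ : amenableRadical G) z)
end
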